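/- If G is a finite connected simple graph of order n ≥ 1, then the burning number of G satisfies b(G) ≤ ⌈(√(12n + 64) + 8)/3⌉. -/

import Mathlib

/-- The burning number of a finite simple graph `G`: the least positive integer `k`
for which there exist sources `x 0, x 1, …, x (k-1)` (indexed by `Fin k`, the `i`-th
source burning a ball of radius `k - 1 - i`) such that every vertex `v` satisfies
`dist (x i) v ≤ k - 1 - i` for some `i`. -/
noncomputable def burningNumber {V : Type*} [Fintype V] (G : SimpleGraph V) : ℕ :=
  sInf {k : ℕ | 0 < k ∧ ∃ x : Fin k → V, ∀ v : V, ∃ i : Fin k,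
    G.dist (x i) v ≤ k - 1 - (i : ℕ)}

/-!
Fix a breadth-first spanning tree and burn an initial subtree `A` of it (a set closed under taking
parents) from the leaves towards the root. Let `R` be the largest of the `p` available radii. Either
one ball of radius `R` covers `A`, or it covers a branch with at least `R + ⌊p / 2⌋` vertices, or
two disjoint branches with at least `2R + q + 1` vertices in total are covered by a ball of radius
`R` together with a ball of radius some `q ≤ 2 ⌊p / 2⌋ - 3`. Removing these branches leaves an
initial subtree, so by induction `p` distinct radii of sum `s` suffice whenever
`|A| ≤ s + ⌊p² / 4⌋`; the second case gains `⌊p / 2⌋` over the radius spent, while in the third the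
`q`-ball is charged to an available radius that exceeds `q` by at most `R - p + 1`.
-/

open Finset

/-- A spanning tree of `G` with a root, given by its parent map and the depth of each vertex. By
truncated subtraction, `depth_parent` makes the root its own parent. -/
structure RootedSpanningTree {V : Type*} (G : SimpleGraph V) where
  root : V
  parent : V → V
  depth : V → ℕ
  depth_eq_zero_iff : ∀ v, depth v = 0 ↔ v = root
  depth_parent : ∀ v, depth (parent v) = depth v - 1
  adj_parent : ∀ v, v ≠ root → G.Adj v (parent v)

theorem exists_adj_dist_eq_pred {V : Type*} {G : SimpleGraph V} (hG : G.Connected) {r v : V}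
    (hv : v ≠ r) : ∃ w, G.Adj v w ∧ G.dist r w = G.dist r v - 1 := by
  obtain ⟨p, hp⟩ := hG.exists_walk_length_eq_dist v r
  cases p with
  | nil => exact absurd rfl hv
  | @cons _ w _ hvw p =>
    refine ⟨w, hvw, ?_⟩
    have hw : G.dist w r ≤ p.length := G.dist_le p
    have hr : G.dist v r ≤ G.dist v w + G.dist w r := hG.dist_triangle
    rw [SimpleGraph.dist_eq_one_iff_adj.2 hvw] at hr
    rw [SimpleGraph.Walk.length_cons] at hp
    rw [G.dist_comm (u := r), G.dist_comm (u := r)]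
    lia

namespace RootedSpanningTree

variable {V : Type*} {G : SimpleGraph V}

theorem nonempty_of_connected (hG : G.Connected) : Nonempty (RootedSpanningTree G) := by
  obtain ⟨r⟩ := hG.nonempty
  have hstep (v : V) : ∃ w, G.dist r w = G.dist r v - 1 ∧ (v ≠ r → G.Adj v w) := by
    by_cases hv : v = r
    · exact ⟨v, by simp [hv], absurd hv⟩
    · obtain ⟨w, hvw, hw⟩ := exists_adj_dist_eq_pred hG hv
      exact ⟨w, hw, fun _ => hvw⟩
  choose parent hdepth hadj using hstep
  exact ⟨⟨r, parent, G.dist r, fun v => hG.dist_eq_zero_iff.trans eq_comm, hdepth, hadj⟩⟩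

variable (T : RootedSpanningTree G) {A B : Finset V} {a b c u v x y z : V} {N R : ℕ}

section Ancestors

theorem parent_root : T.parent T.root = T.root := by
  rw [← T.depth_eq_zero_iff, T.depth_parent, (T.depth_eq_zero_iff _).2 rfl]

theorem depth_iterate_parent (i : ℕ) (u : V) : T.depth (T.parent^[i] u) = T.depth u - i := by
  induction i with
  | zero => rfl
  | succ i ih => rw [Function.iterate_succ_apply', T.depth_parent, ih, Nat.sub_sub]

theorem exists_walk_iterate_parent (i : ℕ) (u : V) :
    ∃ p : G.Walk u (T.parent^[i] u), p.length ≤ i := by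
  induction i generalizing u with
  | zero => exact ⟨.nil, le_rfl⟩
  | succ i ih =>
    obtain ⟨p, hp⟩ := ih (T.parent u)
    rw [Function.iterate_succ_apply]
    by_cases hu : u = T.root
    · subst hu
      exact ⟨p.copy T.parent_root rfl, by rw [SimpleGraph.Walk.length_copy]; lia⟩
    · exact ⟨.cons (T.adj_parent u hu) p, by rw [SimpleGraph.Walk.length_cons]; lia⟩

/-- `a` lies on the path of the tree from `u` to the root; every vertex is an ancestor of itself. -/
def IsAncestor (a u : V) : Prop := ∃ i, T.parent^[i] u = a

variable {T}

theorem IsAncestor.refl (u : V) : T.IsAncestor u u := ⟨0, rfl⟩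

theorem isAncestor_iterate_parent (i : ℕ) (u : V) : T.IsAncestor (T.parent^[i] u) u := ⟨i, rfl⟩

theorem IsAncestor.trans (hab : T.IsAncestor a b) (hbu : T.IsAncestor b u) :
    T.IsAncestor a u := by
  obtain ⟨i, rfl⟩ := hab
  obtain ⟨j, rfl⟩ := hbu
  exact ⟨i + j, Function.iterate_add_apply _ _ _ _⟩

theorem IsAncestor.of_parent (h : T.IsAncestor a (T.parent u)) : T.IsAncestor a u :=
  h.trans (isAncestor_iterate_parent 1 u)

theorem IsAncestor.depth_le (h : T.IsAncestor a u) : T.depth a ≤ T.depth u := by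
  obtain ⟨i, rfl⟩ := h
  rw [depth_iterate_parent]
  exact Nat.sub_le _ _

theorem isAncestor_root (u : V) : T.IsAncestor T.root u :=
  ⟨T.depth u, by rw [← T.depth_eq_zero_iff, depth_iterate_parent, Nat.sub_self]⟩

theorem IsAncestor.iterate_parent_eq (h : T.IsAncestor a u) :
    T.parent^[T.depth u - T.depth a] u = a := by
  obtain ⟨i, rfl⟩ := h
  rw [depth_iterate_parent]
  rcases le_total i (T.depth u) with hi | hi
  · rw [Nat.sub_sub_self hi]
  · have hroot (j : ℕ) (hj : T.depth u ≤ j) : T.parent^[j] u = T.root := by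
      rw [← T.depth_eq_zero_iff, depth_iterate_parent, Nat.sub_eq_zero_of_le hj]
    rw [hroot i hi, hroot _ (by lia)]

theorem IsAncestor.of_depth_le (ha : T.IsAncestor a u) (hb : T.IsAncestor b u)
    (h : T.depth a ≤ T.depth b) : T.IsAncestor a b := by
  obtain ⟨i, rfl⟩ := ha
  obtain ⟨j, rfl⟩ := hb
  rcases le_total j i with hji | hij
  · exact ⟨i - j, by rw [← Function.iterate_add_apply, Nat.sub_add_cancel hji]⟩
  · have hba : T.IsAncestor (T.parent^[j] u) (T.parent^[i] u) :=
      ⟨j - i, by rw [← Function.iterate_add_apply, Nat.sub_add_cancel hij]⟩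
    have heq := hba.iterate_parent_eq
    rw [Nat.sub_eq_zero_of_le h] at heq
    exact ⟨0, heq.symm⟩

theorem IsAncestor.eq_of_depth_eq (ha : T.IsAncestor a u) (hb : T.IsAncestor b u)
    (h : T.depth a = T.depth b) : a = b := by
  rw [← ha.iterate_parent_eq, ← hb.iterate_parent_eq, h]

variable (T) in
theorem exists_isAncestor_depth_eq {d : ℕ} (hd : d ≤ T.depth u) :
    ∃ a, T.IsAncestor a u ∧ T.depth a = d :=
  ⟨_, isAncestor_iterate_parent (T.depth u - d) u, by rw [depth_iterate_parent]; lia⟩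

variable (T) in
theorem exists_lowest_common_ancestor (y z : V) :
    ∃ w, T.IsAncestor w y ∧ T.IsAncestor w z ∧
      ∀ a, T.IsAncestor a y → T.IsAncestor a z → T.IsAncestor a w := by
  classical
  have hex : ∃ i, T.IsAncestor (T.parent^[i] y) z := by
    obtain ⟨i, hi⟩ := T.isAncestor_root y
    exact ⟨i, hi ▸ isAncestor_root z⟩
  refine ⟨_, isAncestor_iterate_parent (Nat.find hex) y, Nat.find_spec hex, ?_⟩
  rintro _ ⟨j, rfl⟩ hj
  refine ⟨j - Nat.find hex, ?_⟩
  rw [← Function.iterate_add_apply, Nat.sub_add_cancel (Nat.find_min' hex hj)]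

/-- Both sides are shifted by `2 * T.depth a` to avoid subtraction. -/
theorem dist_add_two_mul_depth_le (hx : T.IsAncestor a x) (hu : T.IsAncestor a u) :
    G.dist x u + 2 * T.depth a ≤ T.depth x + T.depth u := by
  obtain ⟨p, hp⟩ := T.exists_walk_iterate_parent (T.depth x - T.depth a) x
  obtain ⟨q, hq⟩ := T.exists_walk_iterate_parent (T.depth u - T.depth a) u
  have hmeet := hx.iterate_parent_eq.trans hu.iterate_parent_eq.symm
  have hdist := G.dist_le (p.append (q.reverse.copy hmeet.symm rfl))
  rw [SimpleGraph.Walk.length_append, SimpleGraph.Walk.length_copy,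
    SimpleGraph.Walk.length_reverse] at hdist
  have := hx.depth_le
  have := hu.depth_le
  lia

theorem two_mul_add_lt_of_lt_dist_iterate_parent (hx : T.IsAncestor v x) (hu : T.IsAncestor v u)
    (hux : T.depth u ≤ T.depth x) (hR : R < G.dist (T.parent^[R] x) u) :
    2 * R + 2 * T.depth v < T.depth x + T.depth u := by
  have hdepth := T.depth_iterate_parent R x
  rcases le_total (T.depth v) (T.depth (T.parent^[R] x)) with h | h
  · have := dist_add_two_mul_depth_le (hx.of_depth_le (isAncestor_iterate_parent R x) h) hu
    lia
  · have hv := (isAncestor_iterate_parent R x).of_depth_le hx h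
    have := dist_add_two_mul_depth_le (.refl _) (hv.trans hu)
    lia

end Ancestors

section Branches

open Classical in
/-- The part of `A` that lies in the subtree rooted at `v`. -/
noncomputable def branch (A : Finset V) (v : V) : Finset V := {u ∈ A | T.IsAncestor v u}

variable {T}

theorem mem_branch : u ∈ T.branch A v ↔ u ∈ A ∧ T.IsAncestor v u := by
  classical exact mem_filter

variable (T) in
theorem branch_subset (A : Finset V) (v : V) : T.branch A v ⊆ A := by
  classical exact filter_subset _ _

theorem IsAncestor.branch_subset_branch (h : T.IsAncestor a b) : T.branch A b ⊆ T.branch A a := by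
  intro u hu
  rw [mem_branch] at hu ⊢
  exact ⟨hu.1, h.trans hu.2⟩

theorem branch_root (A : Finset V) : T.branch A T.root = A := by
  ext u
  simp only [mem_branch, isAncestor_root, and_true]

theorem exists_child_mem_branch (hu : u ∈ T.branch A v) (hvu : T.depth v < T.depth u) :
    ∃ c, T.IsAncestor v c ∧ u ∈ T.branch A c ∧ T.depth c = T.depth v + 1 := by
  obtain ⟨huA, hvu'⟩ := mem_branch.1 hu
  obtain ⟨c, hcu, hc⟩ := T.exists_isAncestor_depth_eq (Nat.succ_le_of_lt hvu)
  exact ⟨c, hvu'.of_depth_le hcu (by lia), mem_branch.2 ⟨huA, hcu⟩, hc⟩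

theorem disjoint_branch (hab : a ≠ b) (h : T.depth a = T.depth b) :
    Disjoint (T.branch A a) (T.branch A b) := by
  rw [disjoint_left]
  intro u hua hub
  exact hab ((mem_branch.1 hua).2.eq_of_depth_eq (mem_branch.1 hub).2 h)

theorem mapsTo_parent_sdiff_branch [DecidableEq V] (hB : Set.MapsTo T.parent B B) (hBA : B ⊆ A)
    (c : V) : Set.MapsTo T.parent (B \ T.branch A c : Finset V) (B \ T.branch A c : Finset V) := by
  intro u hu
  rw [mem_coe, mem_sdiff, mem_branch] at hu ⊢
  exact ⟨hB hu.1, fun h => hu.2 ⟨hBA hu.1, h.2.of_parent⟩⟩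

variable (T) in
/-- The first `m` vertices on the way from `z` to the root, including `z`. -/
def path [DecidableEq V] (z : V) (m : ℕ) : Finset V := (range m).image fun i => T.parent^[i] z

theorem mem_path [DecidableEq V] {m : ℕ} :
    a ∈ T.path z m ↔ T.IsAncestor a z ∧ T.depth z < T.depth a + m := by
  simp only [path, mem_image, mem_range]
  constructor
  · rintro ⟨i, hi, rfl⟩
    exact ⟨isAncestor_iterate_parent i z, by rw [depth_iterate_parent]; lia⟩
  · rintro ⟨ha, ham⟩
    have := ha.depth_le
    exact ⟨_, by lia, ha.iterate_parent_eq⟩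

theorem card_path [DecidableEq V] {m : ℕ} (hm : m ≤ T.depth z + 1) : #(T.path z m) = m := by
  rw [path, card_image_of_injOn, card_range]
  intro i hi j hj hij
  have hdepth := congrArg T.depth hij
  simp only [depth_iterate_parent] at hdepth
  rw [mem_coe, mem_range] at hi hj
  lia

theorem path_subset_branch [DecidableEq V] (hA : Set.MapsTo T.parent A A) (hz : z ∈ T.branch A c)
    {m : ℕ} (hm : T.depth c + m ≤ T.depth z + 1) : T.path z m ⊆ T.branch A c := by
  intro a ha
  rw [mem_branch] at hz ⊢
  obtain ⟨haz, ham⟩ := mem_path.1 ha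
  refine ⟨?_, hz.2.of_depth_le haz (by lia)⟩
  obtain ⟨i, rfl⟩ := haz
  exact hA.iterate i hz.1

theorem depth_add_depth_lt_card_branch_add (hA : Set.MapsTo T.parent A A) {w : V}
    (hy : y ∈ T.branch A c) (hz : z ∈ T.branch A c) (hwz : T.IsAncestor w z)
    (hcw : T.IsAncestor c w)
    (hw : ∀ a, T.IsAncestor a y → T.IsAncestor a z → T.IsAncestor a w) :
    T.depth y + T.depth z < #(T.branch A c) + T.depth c + T.depth w := by
  classical
  have hcy := (mem_branch.1 hy).2.depth_le
  have hwz' := hwz.depth_le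
  have hcw' := hcw.depth_le
  have hly : T.depth y + 1 - T.depth c ≤ T.depth y + 1 := by lia
  have hlz : T.depth z - T.depth w ≤ T.depth z + 1 := by lia
  have hdisj : Disjoint (T.path y (T.depth y + 1 - T.depth c))
      (T.path z (T.depth z - T.depth w)) := by
    rw [disjoint_left]
    intro a hay haz
    rw [mem_path] at hay haz
    have := (hw a hay.1 haz.1).depth_le
    lia
  have hsuby : T.path y (T.depth y + 1 - T.depth c) ⊆ T.branch A c :=
    path_subset_branch hA hy (by lia)
  have hsubz : T.path z (T.depth z - T.depth w) ⊆ T.branch A c :=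
    path_subset_branch hA hz (by lia)
  have hcard := card_le_card (union_subset hsuby hsubz)
  rw [card_union_of_disjoint hdisj, card_path hly, card_path hlz] at hcard
  lia

theorem depth_lt_card_branch_add (hA : Set.MapsTo T.parent A A) (hz : z ∈ T.branch A c) :
    T.depth z < #(T.branch A c) + T.depth c := by
  have := depth_add_depth_lt_card_branch_add hA hz hz (.refl z) (mem_branch.1 hz).2
    fun _ ha _ => ha
  lia

theorem exists_ball_of_subset_branch (hA : Set.MapsTo T.parent A A) {U : Finset V}
    (hU : U.Nonempty) (hUc : U ⊆ T.branch A c) (hN : ∀ u ∈ U, N ≤ T.depth u) :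
    ∃ y q, (∀ u ∈ U, G.dist y u ≤ q) ∧ N + q < #(T.branch A c) + T.depth c := by
  obtain ⟨y, hyU, hy⟩ := U.exists_max_image T.depth hU
  choose w hwy hwu hw using T.exists_lowest_common_ancestor y
  obtain ⟨z, hzU, hz⟩ := U.exists_min_image (fun u => T.depth (w u)) hU
  -- The ancestors of `y` form a chain, so the highest of the `w u` is an ancestor of all of `U`.
  have hwzU (u : V) (hu : u ∈ U) : T.IsAncestor (w z) u :=
    ((hwy z).of_depth_le (hwy u) (hz u hu)).trans (hwu u)
  refine ⟨w z, T.depth y - T.depth (w z), fun u hu => ?_, ?_⟩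
  · have := dist_add_two_mul_depth_le (.refl _) (hwzU u hu)
    have := hy u hu
    lia
  · have hcw := hw z c (mem_branch.1 (hUc hyU)).2 (mem_branch.1 (hUc hzU)).2
    have := depth_add_depth_lt_card_branch_add hA (hUc hyU) (hUc hzU) (hwu z) hcw (hw z)
    have := (hwy z).depth_le
    have := hN z hzU
    lia

end Branches

section GreedyBalls

/-- Placing the centre `R` steps above a deepest vertex of the branch at `v` always gives a ball of
radius `R` that covers this branch. -/
def IsGreedilyCovered (R : ℕ) (A : Finset V) (v : V) : Prop :=
  ∀ x ∈ T.branch A v, IsMaxOn T.depth (T.branch A v) x →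
    ∀ u ∈ T.branch A v, G.dist (T.parent^[R] x) u ≤ R

variable {T}

theorem IsGreedilyCovered.exists_center (h : T.IsGreedilyCovered R A v) :
    ∃ x, ∀ u ∈ T.branch A v, G.dist x u ≤ R := by
  rcases (T.branch A v).eq_empty_or_nonempty with hempty | hne
  · exact ⟨v, by simp [hempty]⟩
  · obtain ⟨x, hx, hmax⟩ := exists_max_image _ T.depth hne
    exact ⟨_, h x hx (isMaxOn_iff.2 hmax)⟩

theorem IsGreedilyCovered.dist_le (h : T.IsGreedilyCovered R A c) (hvc : T.IsAncestor v c)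
    (hx : x ∈ T.branch A c) (hmax : IsMaxOn T.depth (T.branch A v) x) (hu : u ∈ T.branch A c) :
    G.dist (T.parent^[R] x) u ≤ R :=
  h x hx (hmax.on_subset (coe_subset.2 hvc.branch_subset_branch)) u hu

theorem exists_deepest_not_isGreedilyCovered (hA : Set.MapsTo T.parent A A)
    (hcover : ∀ x, ∃ u ∈ A, R < G.dist x u) :
    ∃ v, ¬ T.IsGreedilyCovered R A v ∧ ∀ w, T.depth v < T.depth w → T.IsGreedilyCovered R A w := by
  classical
  have mem_of_not {w : V} (hw : ¬ T.IsGreedilyCovered R A w) : w ∈ A := by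
    simp only [IsGreedilyCovered, not_forall] at hw
    obtain ⟨x, hx, -⟩ := hw
    obtain ⟨hxA, i, rfl⟩ := mem_branch.1 hx
    exact hA.iterate i hxA
  have hroot : ¬ T.IsGreedilyCovered R A T.root := fun h => by
    obtain ⟨x, hx⟩ := h.exists_center
    obtain ⟨u, huA, hu⟩ := hcover x
    exact hu.not_ge (hx u ((branch_root A).symm ▸ huA))
  obtain ⟨v, hv, hmax⟩ := exists_max_image {v ∈ A | ¬ T.IsGreedilyCovered R A v} T.depth
    ⟨T.root, mem_filter.2 ⟨mem_of_not hroot, hroot⟩⟩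
  refine ⟨v, (mem_filter.1 hv).2, fun w hvw => ?_⟩
  by_contra hw
  exact hvw.not_ge (hmax w (mem_filter.2 ⟨mem_of_not hw, hw⟩))

theorem exists_two_branches_covered [DecidableEq V] {D : ℕ} (hA : Set.MapsTo T.parent A A)
    (hD : D ≤ R + 1) (hcover : ∀ x, ∃ u ∈ A, R < G.dist x u)
    (hsmall : ∀ c x, (∀ u ∈ T.branch A c, G.dist x u ≤ R) → #(T.branch A c) < R + D) :
    ∃ c₁ c₂ x y q, q + 3 ≤ 2 * D ∧ 2 * R + q < #(T.branch A c₁ ∪ T.branch A c₂) ∧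
      ∀ u ∈ T.branch A c₁ ∪ T.branch A c₂, G.dist x u ≤ R ∨ G.dist y u ≤ q := by
  obtain ⟨v, hv, hbelow⟩ := exists_deepest_not_isGreedilyCovered hA hcover
  simp only [IsGreedilyCovered, not_forall, not_le] at hv
  obtain ⟨x, hx, hxmax, u, hu, hxu⟩ := hv
  have hdeep (z : V) (hz : z ∈ T.branch A v) (hxz : R < G.dist (T.parent^[R] x) z) :
      2 * R + 2 * T.depth v < T.depth x + T.depth z :=
    two_mul_add_lt_of_lt_dist_iterate_parent (mem_branch.1 hx).2 (mem_branch.1 hz).2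
      (isMaxOn_iff.1 hxmax z hz) hxz
  have small (c : V) (hc : T.IsGreedilyCovered R A c) : #(T.branch A c) < R + D :=
    let ⟨y, hy⟩ := hc.exists_center
    hsmall c y hy
  have hu_deep := hdeep u hu hxu
  have hu_le := isMaxOn_iff.1 hxmax u hu
  obtain ⟨c₁, hvc₁, hxc₁, hc₁⟩ := exists_child_mem_branch hx (by lia)
  have hgreedy := hbelow c₁ (by lia)
  have hcard₁ := small c₁ hgreedy
  have hx_lt := depth_lt_card_branch_add hA hxc₁
  obtain ⟨c₂, hvc₂, huc₂, hc₂⟩ := exists_child_mem_branch hu (by lia)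
  have hcard₂ := small c₂ (hbelow c₂ (by lia))
  have hcov₁ (z : V) (hz : z ∈ T.branch A c₁) := hgreedy.dist_le hvc₁ hxc₁ hxmax hz
  have hne : c₁ ≠ c₂ := by
    rintro rfl
    exact hxu.not_ge (hcov₁ u huc₂)
  obtain ⟨y, q, hy, hq⟩ := exists_ball_of_subset_branch
    (U := {z ∈ T.branch A c₂ | R < G.dist (T.parent^[R] x) z})
    (N := 2 * R + 2 * T.depth v + 1 - T.depth x) hA ⟨u, mem_filter.2 ⟨huc₂, hxu⟩⟩
    (filter_subset _ _) fun z hz => by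
      have hz := mem_filter.1 hz
      have := hdeep z (hvc₂.branch_subset_branch hz.1) hz.2
      lia
  have hcard := card_union_of_disjoint (disjoint_branch (A := A) hne (hc₁.trans hc₂.symm))
  refine ⟨c₁, c₂, T.parent^[R] x, y, q, by lia, by lia, fun z hz => ?_⟩
  rcases mem_union.1 hz with hz₁ | hz₂
  · exact .inl (hcov₁ z hz₁)
  · exact (le_or_gt (G.dist (T.parent^[R] x) z) R).imp_right fun h =>
      hy z (mem_filter.2 ⟨hz₂, h⟩)

end GreedyBalls

end RootedSpanningTree

/-- `A` is covered by balls of `G` whose radii are the elements of `S`, each used once; `x r` is the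
centre of the ball of radius `r`. -/
def CoveredByBalls {V : Type*} (G : SimpleGraph V) (S : Finset ℕ) (A : Set V) : Prop :=
  ∃ x : ℕ → V, ∀ u ∈ A, ∃ r ∈ S, G.dist (x r) u ≤ r

namespace CoveredByBalls

variable {V : Type*} {G : SimpleGraph V} {S : Finset ℕ} {A B C : Set V} {r s : ℕ} {x y : V}

theorem mono (h : CoveredByBalls G S B) (hAB : A ⊆ B) : CoveredByBalls G S A :=
  let ⟨x, hx⟩ := h
  ⟨x, fun u hu => hx u (hAB hu)⟩

theorem of_sdiff (hr : r ∈ S) (h : CoveredByBalls G (S.erase r) (A \ C))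
    (hx : ∀ u ∈ C, G.dist x u ≤ r) : CoveredByBalls G S A := by
  obtain ⟨f, hf⟩ := h
  refine ⟨Function.update f r x, fun u hu => ?_⟩
  by_cases huC : u ∈ C
  · exact ⟨r, hr, by rw [Function.update_self]; exact hx u huC⟩
  · obtain ⟨t, ht, htu⟩ := hf u ⟨hu, huC⟩
    exact ⟨t, mem_of_mem_erase ht, by rwa [Function.update_of_ne (ne_of_mem_erase ht)]⟩

theorem of_sdiff_of_two_balls (hr : r ∈ S) (hs : s ∈ S.erase r)
    (h : CoveredByBalls G ((S.erase r).erase s) (A \ C))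
    (hxy : ∀ u ∈ C, G.dist x u ≤ r ∨ G.dist y u ≤ s) : CoveredByBalls G S A := by
  refine .of_sdiff (C := {u | G.dist x u ≤ r}) hr
    (.of_sdiff (C := {u | G.dist y u ≤ s}) hs (h.mono ?_) fun _ => id) fun _ => id
  rintro u ⟨⟨huA, hxu⟩, hyu⟩
  exact ⟨huA, fun hu => (hxy u hu).elim hxu hyu⟩

theorem burningNumber_le [Fintype V] {k : ℕ} (h : CoveredByBalls G (range k) Set.univ)
    (hk : 0 < k) : burningNumber G ≤ k := by
  obtain ⟨x, hx⟩ := h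
  refine Nat.sInf_le ⟨hk, fun i => x (k - 1 - i), fun v => ?_⟩
  obtain ⟨r, hr, hv⟩ := hx v (Set.mem_univ v)
  have hrk := mem_range.1 hr
  refine ⟨⟨k - 1 - r, by lia⟩, ?_⟩
  have hindex : k - 1 - (k - 1 - r) = r := by lia
  simpa only [hindex] using hv

end CoveredByBalls

theorem exists_mem_ge_add_card_le {S : Finset ℕ} {R q : ℕ} (hS : ∀ s ∈ S, s < R) (hq : q < #S) :
    ∃ s ∈ S, q ≤ s ∧ s + #S ≤ R + q := by
  by_contra! hlarge
  have hsub : S ⊆ range q ∪ Ico (R + q + 1 - #S) R := fun s hs => by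
    have := hS s hs
    have := hlarge s hs
    simp only [mem_union, mem_range, mem_Ico]
    lia
  have hcard := (card_le_card hsub).trans (card_union_le _ _)
  rw [card_range, Nat.card_Ico] at hcard
  lia

/-- The guaranteed capacity of the radii in `S`: balls with these radii cover every initial subtree
with at most this many vertices. -/
def radiiBudget (S : Finset ℕ) : ℕ := ∑ r ∈ S, r + #S ^ 2 / 4

theorem radiiBudget_le_erase {S : Finset ℕ} {r : ℕ} (hr : r ∈ S) :
    radiiBudget S ≤ radiiBudget (S.erase r) + (r + #S / 2) := by
  have hsq (m : ℕ) : (m + 1) ^ 2 / 4 ≤ m ^ 2 / 4 + (m + 1) / 2 := by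
    rcases Nat.even_or_odd' m with ⟨t, rfl | rfl⟩ <;> ring_nf <;> lia
  have hsq_card := hsq #(S.erase r)
  rw [radiiBudget, radiiBudget, ← add_sum_erase S (fun r => r) hr, ← card_erase_add_one hr]
  lia

theorem radiiBudget_erase_erase {S : Finset ℕ} {r s : ℕ} (hr : r ∈ S) (hs : s ∈ S.erase r) :
    radiiBudget S = radiiBudget ((S.erase r).erase s) + (r + s + #(S.erase r)) := by
  have hsq (m : ℕ) : (m + 1 + 1) ^ 2 / 4 = m ^ 2 / 4 + (m + 1) := by
    rw [show (m + 1 + 1) ^ 2 = m ^ 2 + (m + 1) * 4 by ring, Nat.add_mul_div_right _ _ four_pos]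
  rw [radiiBudget, radiiBudget, ← add_sum_erase S (fun r => r) hr,
    ← add_sum_erase _ (fun r => r) hs, ← card_erase_add_one hr,
    ← card_erase_add_one hs, hsq]
  lia

namespace RootedSpanningTree

variable {V : Type*} {G : SimpleGraph V}

theorem coveredByBalls_of_card_le (T : RootedSpanningTree G) {S : Finset ℕ} {A : Finset V}
    (hA : Set.MapsTo T.parent A A) (hcard : #A ≤ radiiBudget S) : CoveredByBalls G S A := by
  classical
  induction S using Finset.strongInduction generalizing A with
  | H S ih =>
  rcases S.eq_empty_or_nonempty with rfl | hS
  · exact ⟨fun _ => T.root, by simp_all [radiiBudget]⟩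
  obtain ⟨R, hR, hRmax⟩ := S.exists_max_image id hS
  by_cases hball : ∃ x, ∀ u ∈ A, G.dist x u ≤ R
  · obtain ⟨x, hx⟩ := hball
    exact ⟨fun _ => x, fun u hu => ⟨R, hR, hx u hu⟩⟩
  by_cases hbranch : ∃ c x, (∀ u ∈ T.branch A c, G.dist x u ≤ R) ∧ R + #S / 2 ≤ #(T.branch A c)
  · obtain ⟨c, x, hx, hc⟩ := hbranch
    have hbudget := radiiBudget_le_erase hR
    have hremoved := card_sdiff_add_card_eq_card (T.branch_subset A c)
    have hrest := ih _ (erase_ssubset hR) (mapsTo_parent_sdiff_branch hA subset_rfl c) (by lia)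
    rw [coe_sdiff] at hrest
    exact hrest.of_sdiff hR hx
  push Not at hball hbranch
  have hSR : #S ≤ R + 1 := by
    rw [← card_range (R + 1)]
    exact card_le_card fun s hs => mem_range_succ_iff.2 (hRmax s hs)
  obtain ⟨c₁, c₂, x, y, q, hq, hc, hxy⟩ :=
    exists_two_branches_covered hA (by lia) hball hbranch
  obtain ⟨s, hs, hqs, hsR⟩ := exists_mem_ge_add_card_le (S := S.erase R) (R := R) (q := q)
    (fun s hs => (hRmax s (mem_of_mem_erase hs)).lt_of_ne (ne_of_mem_erase hs))
    (by have := card_erase_add_one hR; lia)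
  have hbudget := radiiBudget_erase_erase hR hs
  have hremoved := card_sdiff_add_card_eq_card
    (union_subset (T.branch_subset A c₁) (T.branch_subset A c₂))
  have hclosed := mapsTo_parent_sdiff_branch
    (mapsTo_parent_sdiff_branch hA subset_rfl c₁) sdiff_subset c₂
  rw [sdiff_sdiff_left, sup_eq_union] at hclosed
  have hrest := ih ((S.erase R).erase s)
    ((erase_subset _ _).trans_ssubset (erase_ssubset hR)) hclosed (by lia)
  rw [coe_sdiff] at hrest
  exact hrest.of_sdiff_of_two_balls hR hs fun u hu => (hxy u hu).imp_right hqs.trans'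

end RootedSpanningTree

theorem burningNumber_le_of_card_le {V : Type*} [Fintype V] {G : SimpleGraph V}
    (hG : G.Connected) {k : ℕ} (hk : Fintype.card V ≤ radiiBudget (range k)) :
    burningNumber G ≤ k := by
  obtain ⟨T⟩ := RootedSpanningTree.nonempty_of_connected hG
  have hcover := T.coveredByBalls_of_card_le (S := range k) (A := univ)
    (fun _ _ => mem_coe.2 (mem_univ _)) hk
  rw [coe_univ] at hcover
  refine hcover.burningNumber_le (Nat.pos_of_ne_zero ?_)
  rintro rfl
  have := hG.nonempty
  exact Fintype.card_pos.not_ge hk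

theorem le_radiiBudget_range {n k : ℕ} (h : (√(12 * n + 64) + 8) / 3 ≤ k) :
    n ≤ radiiBudget (range k) := by
  have hquad : 4 * n + 16 * k ≤ 3 * k ^ 2 := by
    have hsqrt : √(12 * n + 64) ≤ 3 * k - 8 := by linarith
    have hsq := (Real.sqrt_le_iff.1 hsqrt).2
    have : (4 * n + 16 * k : ℝ) ≤ 3 * k ^ 2 := by linarith
    exact_mod_cast this
  have hsum := sum_range_id_mul_two k
  rw [Nat.mul_sub_one, ← sq] at hsum
  rw [radiiBudget, card_range]
  lia

/-- **Theorem (Bonato–Kamali).** If `G` is a connected graph of order `n ≥ 1`, then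
`b(G) ≤ ⌈(√(12n + 64) + 8)/3⌉`. -/
theorem burningNumber_connected_le {V : Type*} [Fintype V] (T : SimpleGraph V)
    (hT : T.Connected) (n : ℕ) (hn : n = Fintype.card V) (hn1 : 1 ≤ n) :
    burningNumber T ≤ ⌈(Real.sqrt (12 * (n : ℝ) + 64) + 8) / 3⌉₊ :=
  burningNumber_le_of_card_le hT (hn ▸ le_radiiBudget_range (Nat.le_ceil _))
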